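/- For every real number x > 1 that is not an integer, the integral over t ∈ (−∞, ∞) of (1/(1 + cosh(t)))·[(x−1)/(t² + (x−1)²π²) − (x+1)/(t² + (x+1)²π²)] dt equals −(8/π²) · Σ_{k=1}^∞ [ (2k−1)(x−1)/(((x−1)² − (2k−1)²)²) − (2k−1)(x+1)/(((x+1)² − (2k−1)²)²) ]. -/

import Mathlib

/-!
Substituting `u = sigmoid t`, so that `u / (1 - u) = exp t` and `du = dt / (2 (1 + cosh t))`, turns
`∫ exp (z t) / (1 + cosh t) dt` into the Beta integral `2 B(1 + z, 1 - z) = 2πz / sin (πz)`; hence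
the cosine transform of `1 / (1 + cosh t)` is `2πs / sinh (πs)`. On the other side,
`(y - π) / (t² + (y - π)²) - (y + π) / (t² + (y + π)²)` is the cosine transform of
`2 exp (-ys) sinh (πs)` over `s > 0`. By Fubini the factors `sinh (πs)` cancel, and the integral
becomes `4π ∫ s exp (-ys) ds = 4π / y²`, used at `y = πx`. The residue series telescopes to
`-1 / (2x²)`.
-/

open Real Set MeasureTheory

section Sigmoid

theorem one_sub_sigmoid (t : ℝ) : 1 - sigmoid t = exp (-t) * sigmoid t := by
  rw [← sigmoid_neg, ← sigmoid_mul_rexp_neg, mul_comm]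

theorem log_sigmoid_sub_log_one_sub_sigmoid (t : ℝ) :
    log (sigmoid t) - log (1 - sigmoid t) = t := by
  rw [one_sub_sigmoid, log_mul (exp_ne_zero _) (sigmoid_pos t).ne', log_exp]
  ring

theorem sigmoid_mul_one_sub_sigmoid_pos (t : ℝ) : 0 < sigmoid t * (1 - sigmoid t) :=
  mul_pos (sigmoid_pos t) (sub_pos.2 (sigmoid_lt_one t))

theorem one_div_one_add_cosh (t : ℝ) :
    1 / (1 + cosh t) = 2 * (sigmoid t * (1 - sigmoid t)) := by
  rw [one_sub_sigmoid, sigmoid_def, cosh_eq, exp_neg]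
  field_simp
  ring

theorem sigmoid_cpow_mul_one_sub_sigmoid_cpow_neg (z : ℂ) (t : ℝ) :
    (sigmoid t : ℂ) ^ z * (1 - sigmoid t : ℂ) ^ (-z) = Complex.exp (z * t) := by
  have hσ : 0 < sigmoid t := sigmoid_pos t
  have hσ' : 0 < 1 - sigmoid t := sub_pos.2 (sigmoid_lt_one t)
  have hlog : (log (sigmoid t) : ℂ) - log (1 - sigmoid t) = t :=
    mod_cast log_sigmoid_sub_log_one_sub_sigmoid t
  rw [← Complex.ofReal_one, ← Complex.ofReal_sub,
    Complex.cpow_def_of_ne_zero (Complex.ofReal_ne_zero.2 hσ.ne'),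
    Complex.cpow_def_of_ne_zero (Complex.ofReal_ne_zero.2 hσ'.ne'),
    ← Complex.ofReal_log hσ.le, ← Complex.ofReal_log hσ'.le, ← Complex.exp_add, ← hlog]
  ring_nf

variable {E : Type*} [NormedAddCommGroup E] [NormedSpace ℝ E]

theorem integrable_comp_sigmoid_iff {f : ℝ → E} :
    Integrable (fun t ↦ (sigmoid t * (1 - sigmoid t)) • f (sigmoid t)) ↔
      IntegrableOn f (Ioo 0 1) := by
  rw [← range_sigmoid, ← image_univ, integrableOn_image_iff_integrableOn_abs_deriv_smul
    MeasurableSet.univ (fun t _ ↦ (hasDerivAt_sigmoid t).hasDerivWithinAt)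
    sigmoid_injective.injOn, integrableOn_univ]
  simp only [abs_of_pos (sigmoid_mul_one_sub_sigmoid_pos _)]

theorem integral_comp_sigmoid (f : ℝ → E) :
    ∫ t, (sigmoid t * (1 - sigmoid t)) • f (sigmoid t) = ∫ u in Ioo 0 1, f u := by
  rw [← range_sigmoid, ← image_univ, integral_image_eq_integral_abs_deriv_smul MeasurableSet.univ
    (fun t _ ↦ (hasDerivAt_sigmoid t).hasDerivWithinAt) sigmoid_injective.injOn, setIntegral_univ]
  simp only [abs_of_pos (sigmoid_mul_one_sub_sigmoid_pos _)]

end Sigmoid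

section CosineTransform

theorem integrable_one_div_one_add_cosh : Integrable fun t : ℝ ↦ 1 / (1 + cosh t) := by
  have hone : IntegrableOn (fun _ : ℝ ↦ (1 : ℝ)) (Ioo 0 1) := by simp
  simpa only [one_div_one_add_cosh, smul_eq_mul, mul_one] using
    (integrable_comp_sigmoid_iff.2 hone).const_mul 2

theorem integral_one_div_one_add_cosh_smul_cexp (z : ℂ) :
    ∫ t : ℝ, (1 / (1 + cosh t)) • Complex.exp (z * t)
      = 2 * Complex.betaIntegral (1 + z) (1 - z) := by
  rw [Complex.betaIntegral, intervalIntegral.integral_of_le zero_le_one,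
    integral_Ioc_eq_integral_Ioo, ← integral_comp_sigmoid, ← integral_const_mul]
  congr 1 with t
  rw [one_div_one_add_cosh, add_sub_cancel_left, sub_sub_cancel_left,
    sigmoid_cpow_mul_one_sub_sigmoid_cpow_neg]
  simp [mul_assoc]

theorem betaIntegral_one_add_one_sub {z : ℂ} (hz₀ : z ≠ 0) (hz : |z.re| < 1) :
    Complex.betaIntegral (1 + z) (1 - z) = π * z / Complex.sin (π * z) := by
  obtain ⟨hz₁, hz₂⟩ := abs_lt.1 hz
  have hsum : z + 1 + (1 - z) = 1 + 1 := by ring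
  rw [add_comm 1 z, Complex.betaIntegral_eq_Gamma_mul_div _ _ (by simp; linarith)
    (by simp; linarith), hsum, Complex.Gamma_add_one z hz₀, mul_assoc,
    Complex.Gamma_mul_Gamma_one_sub, Complex.Gamma_add_one 1 one_ne_zero,
    Complex.Gamma_one]
  ring

theorem integral_one_div_one_add_cosh_mul_cos {s : ℝ} (hs : s ≠ 0) :
    ∫ t : ℝ, 1 / (1 + cosh t) * cos (s * t) = 2 * π * s / sinh (π * s) := by
  have hint : Integrable fun t : ℝ ↦ (1 / (1 + cosh t)) • Complex.exp (s * Complex.I * t) :=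
    integrable_one_div_one_add_cosh.smul_bdd 1 (by fun_prop)
      (.of_forall fun t ↦ by simp [Complex.norm_exp])
  have hre (t : ℝ) : 1 / (1 + cosh t) * cos (s * t) =
      RCLike.re ((1 / (1 + cosh t)) • Complex.exp (s * Complex.I * t)) := by
    rw [RCLike.smul_re, RCLike.re_eq_complex_re, Complex.exp_re]
    simp
  have hval : ∫ t : ℝ, (1 / (1 + cosh t)) • Complex.exp (s * Complex.I * t)
      = ((2 * π * s / sinh (π * s) : ℝ) : ℂ) := by
    rw [integral_one_div_one_add_cosh_smul_cexp,
      betaIntegral_one_add_one_sub (by simpa using hs) (by simp), ← mul_assoc (π : ℂ),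
      Complex.sin_mul_I]
    push_cast
    field_simp
  simp_rw [hre]
  rw [integral_re hint, hval, RCLike.re_eq_complex_re, Complex.ofReal_re]

theorem integrableOn_exp_neg_mul_mul_cos {c : ℝ} (hc : 0 < c) (t : ℝ) :
    IntegrableOn (fun s ↦ exp (-c * s) * cos (s * t)) (Ioi 0) :=
  (exp_neg_integrableOn_Ioi 0 hc).mul_bdd (c := 1) (by fun_prop)
    (.of_forall fun _ ↦ abs_cos_le_one _)

theorem integral_exp_neg_mul_mul_cos {c : ℝ} (hc : 0 < c) (t : ℝ) :
    ∫ s in Ioi 0, exp (-c * s) * cos (s * t) = c / (t ^ 2 + c ^ 2) := by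
  have hre : (-c + t * Complex.I : ℂ).re < 0 := by simpa
  have hval := congrArg RCLike.re (integral_exp_mul_complex_Ioi hre 0)
  rw [← integral_re (integrableOn_exp_mul_complex_Ioi hre 0)] at hval
  simpa [Complex.exp_re, Complex.div_re, Complex.normSq_apply, mul_comm t, ← sq, neg_div,
    add_comm (c ^ 2)] using hval

theorem integral_mul_integral_mul_cos {μ ν : Measure ℝ} [SFinite μ] [SFinite ν] {f g : ℝ → ℝ}
    (hf : Integrable f μ) (hg : Integrable g ν) :
    ∫ t, f t * ∫ s, g s * cos (s * t) ∂ν ∂μ = ∫ s, g s * ∫ t, f t * cos (s * t) ∂μ ∂ν := by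
  have hint : Integrable (fun p : ℝ × ℝ ↦ f p.1 * g p.2 * cos (p.2 * p.1)) (μ.prod ν) :=
    (hf.mul_prod hg).mul_bdd (c := 1) (by fun_prop) (.of_forall fun _ ↦ abs_cos_le_one _)
  simp_rw [mul_assoc] at hint
  have hswap := integral_integral_swap (f := fun t s ↦ f t * (g s * cos (s * t))) hint
  simp_rw [← integral_const_mul, hswap, mul_left_comm]

end CosineTransform

section Evaluation

theorem integral_mul_exp_neg_mul_Ioi {b : ℝ} (hb : 0 < b) :
    ∫ s in Ioi 0, s * exp (-(b * s)) = 1 / b ^ 2 := by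
  have h := integral_rpow_mul_exp_neg_mul_Ioi two_pos hb
  rw [Gamma_two, mul_one, rpow_two, one_div_pow] at h
  rw [← h]
  norm_num

theorem exp_neg_sub_mul_sub_exp_neg_add_mul (a b s : ℝ) :
    exp (-(a - b) * s) - exp (-(a + b) * s) = 2 * exp (-(a * s)) * sinh (b * s) := by
  have hsub : -(a - b) * s = -(a * s) + b * s := by ring
  have hadd : -(a + b) * s = -(a * s) + -(b * s) := by ring
  rw [hsub, hadd, exp_add, exp_add, sinh_eq]
  ring

variable {y : ℝ}

theorem integral_one_div_one_add_cosh_mul_sub_of_pi_lt (hy : π < y) :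
    ∫ t : ℝ, 1 / (1 + cosh t) *
        ((y - π) / (t ^ 2 + (y - π) ^ 2) - (y + π) / (t ^ 2 + (y + π) ^ 2))
      = 4 * π / y ^ 2 := by
  have hsub : 0 < y - π := sub_pos.2 hy
  have hadd : 0 < y + π := add_pos (pi_pos.trans hy) pi_pos
  let g (s : ℝ) : ℝ := exp (-(y - π) * s) - exp (-(y + π) * s)
  have hg_int : IntegrableOn g (Ioi 0) :=
    (exp_neg_integrableOn_Ioi 0 hsub).sub (exp_neg_integrableOn_Ioi 0 hadd)
  have hg_cos (t : ℝ) : ∫ s in Ioi 0, g s * cos (s * t) =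
      (y - π) / (t ^ 2 + (y - π) ^ 2) - (y + π) / (t ^ 2 + (y + π) ^ 2) := by
    simp only [g, sub_mul (exp _)]
    rw [integral_sub (integrableOn_exp_neg_mul_mul_cos hsub t)
      (integrableOn_exp_neg_mul_mul_cos hadd t), integral_exp_neg_mul_mul_cos hsub,
      integral_exp_neg_mul_mul_cos hadd]
  have hcancel : ∀ s ∈ Ioi (0 : ℝ), g s * ∫ t : ℝ, 1 / (1 + cosh t) * cos (s * t) =
      4 * π * (s * exp (-(y * s))) := fun s (hs : 0 < s) ↦ by
    have hsinh : sinh (π * s) ≠ 0 := (sinh_pos_iff.2 (by positivity)).ne'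
    simp only [g]
    rw [exp_neg_sub_mul_sub_exp_neg_add_mul, integral_one_div_one_add_cosh_mul_cos hs.ne']
    field_simp [hsinh]
    ring
  simp_rw [← hg_cos]
  rw [integral_mul_integral_mul_cos integrable_one_div_one_add_cosh hg_int,
    setIntegral_congr_fun measurableSet_Ioi hcancel, integral_const_mul,
    integral_mul_exp_neg_mul_Ioi (pi_pos.trans hy), mul_one_div]

theorem integral_one_div_one_add_cosh_mul_sub (hy : π < |y|) :
    ∫ t : ℝ, 1 / (1 + cosh t) *
        ((y - π) / (t ^ 2 + (y - π) ^ 2) - (y + π) / (t ^ 2 + (y + π) ^ 2))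
      = 4 * π / y ^ 2 := by
  rcases lt_abs.1 hy with hy | hy
  · exact integral_one_div_one_add_cosh_mul_sub_of_pi_lt hy
  · rw [← neg_sq y, ← integral_one_div_one_add_cosh_mul_sub_of_pi_lt hy]
    congr with t
    ring

end Evaluation

section ResidueSeries

theorem hasSum_succ_sub {G : Type*} [AddCommGroup G] [TopologicalSpace G]
    [IsTopologicalAddGroup G] {f : ℕ → G} (hf : Summable f) :
    HasSum (fun k ↦ f (k + 1) - f k) (-f 0) := by
  simpa using ((hasSum_nat_add_iff' 1).2 hf.hasSum).sub hf.hasSum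

theorem four_mul_mul_div_sq_sub_sq_sq {K : Type*} [Field K] {a b : K} (hsub : a - b ≠ 0)
    (hadd : a + b ≠ 0) :
    4 * (b * a / (a ^ 2 - b ^ 2) ^ 2) = 1 / (a - b) ^ 2 - 1 / (a + b) ^ 2 := by
  rw [sq_sub_sq]
  field_simp
  ring

theorem summable_one_div_add_two_mul_sq (x : ℝ) :
    Summable fun k : ℕ ↦ 1 / (x + 2 * k) ^ 2 := by
  have h := (summable_one_div_nat_add_rpow (x / 2) 2).2 one_lt_two
  refine (h.mul_left (1 / 4)).congr fun k ↦ ?_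
  have hscale : (x + 2 * k) ^ 2 = 4 * (k + x / 2) ^ 2 := by ring
  rw [rpow_two, sq_abs, hscale, one_div_mul_one_div]

theorem hasSum_residue_series {x : ℝ} (hx : ∀ m : ℤ, x ≠ 2 * m) :
    HasSum (fun k : ℕ ↦ (2 * (k : ℝ) + 1) * (x - 1) / ((x - 1) ^ 2 - (2 * (k : ℝ) + 1) ^ 2) ^ 2
        - (2 * (k : ℝ) + 1) * (x + 1) / ((x + 1) ^ 2 - (2 * (k : ℝ) + 1) ^ 2) ^ 2)
      (-(1 / (2 * x ^ 2))) := by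
  let u (k : ℕ) : ℝ := 1 / (x + 2 * k) ^ 2 + 1 / (-x + 2 * k) ^ 2
  have hu : Summable u :=
    (summable_one_div_add_two_mul_sq x).add (summable_one_div_add_two_mul_sq (-x))
  have hne (m : ℤ) : x - 2 * m ≠ 0 := sub_ne_zero.2 (hx m)
  have htelescope (k : ℕ) :
      (2 * (k : ℝ) + 1) * (x - 1) / ((x - 1) ^ 2 - (2 * (k : ℝ) + 1) ^ 2) ^ 2
        - (2 * (k : ℝ) + 1) * (x + 1) / ((x + 1) ^ 2 - (2 * (k : ℝ) + 1) ^ 2) ^ 2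
      = 1 / 4 * (u (k + 1) - u k) := by
    have h₁ := four_mul_mul_div_sq_sub_sq_sq (a := x - 1) (b := 2 * k + 1)
      (by convert hne (k + 1) using 1; push_cast; ring)
      (by convert hne (-k) using 1; push_cast; ring)
    have h₂ := four_mul_mul_div_sq_sub_sq_sq (a := x + 1) (b := 2 * k + 1)
      (by convert hne k using 1; push_cast; ring)
      (by convert hne (-(k + 1)) using 1; push_cast; ring)
    simp only [u]
    push_cast
    linear_combination (h₁ - h₂) / 4
  have hu_zero : 1 / 4 * -u 0 = -(1 / (2 * x ^ 2)) := by
    simp only [u, Nat.cast_zero, mul_zero, add_zero, neg_sq]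
    ring
  rw [funext htelescope, ← hu_zero]
  exact (hasSum_succ_sub hu).mul_left (1 / 4)

end ResidueSeries

theorem integral_cosh_winding_residue_series_general (x : ℝ) (hx : 1 < |x|)
    (hx_even : ∀ m : ℤ, x ≠ 2 * m) :
    ∫ t : ℝ, (1 / (1 + Real.cosh t)) *
        ((x - 1) / (t ^ 2 + (x - 1) ^ 2 * π ^ 2) - (x + 1) / (t ^ 2 + (x + 1) ^ 2 * π ^ 2))
      = -(8 / π ^ 2) * ∑' k : ℕ,
          ((2 * (k : ℝ) + 1) * (x - 1) / ((x - 1) ^ 2 - (2 * (k : ℝ) + 1) ^ 2) ^ 2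
            - (2 * (k : ℝ) + 1) * (x + 1) / ((x + 1) ^ 2 - (2 * (k : ℝ) + 1) ^ 2) ^ 2) := by
  have hy : π < |π * x| := by
    rw [abs_mul, abs_of_pos pi_pos]
    exact lt_mul_of_one_lt_right pi_pos hx
  have hscale (c t : ℝ) :
      c / (t ^ 2 + c ^ 2 * π ^ 2) = 1 / π * (π * c / (t ^ 2 + (π * c) ^ 2)) := by
    field_simp
  have hsub : π * (x - 1) = π * x - π := by ring
  have hadd : π * (x + 1) = π * x + π := by ring
  simp_rw [hscale, ← mul_sub, mul_left_comm _ (1 / π), hsub, hadd]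
  rw [integral_const_mul, integral_one_div_one_add_cosh_mul_sub hy,
    (hasSum_residue_series hx_even).tsum_eq]
  field_simp
  norm_num

/-- For `x > 1` not an integer, the integral
`∫_ℝ (1/(1+cosh t)) [ (x-1)/(t² + (x-1)²π²) - (x+1)/(t² + (x+1)²π²) ] dt`
equals
`-(8/π²) Σ_{k=1}^∞ [ (2k-1)(x-1)/((x-1)² - (2k-1)²)² - (2k-1)(x+1)/((x+1)² - (2k-1)²)² ]`,
where the sum over `k ≥ 1` is written as a sum over `k : ℕ` via `k ↦ k + 1`
(so that `2k - 1` becomes `2k + 1`). -/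
theorem integral_cosh_winding_residue_series (x : ℝ) (hx : 1 < x)
    (hxint : ∀ m : ℤ, x ≠ m) :
    ∫ t : ℝ, (1 / (1 + Real.cosh t)) *
        ((x - 1) / (t ^ 2 + (x - 1) ^ 2 * π ^ 2) - (x + 1) / (t ^ 2 + (x + 1) ^ 2 * π ^ 2))
      = -(8 / π ^ 2) * ∑' k : ℕ,
          ((2 * (k : ℝ) + 1) * (x - 1) / ((x - 1) ^ 2 - (2 * (k : ℝ) + 1) ^ 2) ^ 2
            - (2 * (k : ℝ) + 1) * (x + 1) / ((x + 1) ^ 2 - (2 * (k : ℝ) + 1) ^ 2) ^ 2) := by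
  exact integral_cosh_winding_residue_series_general x (hx.trans_le (le_abs_self x))
    fun m ↦ mod_cast hxint (2 * m)
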